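/- Let P be a simple polytope and let F be a face of P. Then F is an edge of P if and only if there is precisely one unordered pair of distinct vertices u, v of P for which F = u ∨ v. -/

import Mathlib

/-- `P` is a polytope: the convex hull of finitely many points. -/
def IsPolytope {n : ℕ} (P : Set (Fin n → ℝ)) : Prop :=
  ∃ S : Finset (Fin n → ℝ), P = convexHull ℝ (S : Set (Fin n → ℝ))

/-- A face of `P`: the empty set, `P` itself, or the intersection of `P`
with a supporting hyperplane. -/
def IsFace {n : ℕ} (P F : Set (Fin n → ℝ)) : Prop :=
  F = ∅ ∨ F = P ∨ ∃ (f : (Fin n → ℝ) →ₗ[ℝ] ℝ) (c : ℝ),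
    (∀ x ∈ P, f x ≤ c) ∧ F = {x ∈ P | f x = c}

/-- The dimension of a subset of `ℝⁿ`: the rank of its vector span
(i.e., its affine dimension). -/
noncomputable def sdim {n : ℕ} (F : Set (Fin n → ℝ)) : ℕ :=
  Module.finrank ℝ ↥(vectorSpan ℝ F)

/-- A vertex of `P`: a point whose singleton is a (0-dimensional) face of `P`. -/
def IsVertex {n : ℕ} (P : Set (Fin n → ℝ)) (v : Fin n → ℝ) : Prop :=
  IsFace P {v}

/-- A facet of `P`: a nonempty face of dimension `dim P - 1`. -/
def IsFacet {n : ℕ} (P F : Set (Fin n → ℝ)) : Prop :=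
  IsFace P F ∧ F.Nonempty ∧ sdim F + 1 = sdim P

/-- An edge of `P`: a face of dimension 1. -/
def IsEdge {n : ℕ} (P F : Set (Fin n → ℝ)) : Prop :=
  IsFace P F ∧ sdim F = 1

/-- Two vertices are adjacent if they are joined by an edge. -/
def Adjacent {n : ℕ} (P : Set (Fin n → ℝ)) (u v : Fin n → ℝ) : Prop :=
  u ≠ v ∧ ∃ F, IsEdge P F ∧ u ∈ F ∧ v ∈ F

/-- A polytope is simple if every vertex belongs to precisely `dim P` facets. -/
def IsSimplePolytope {n : ℕ} (P : Set (Fin n → ℝ)) : Prop :=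
  ∀ v, IsVertex P v → {F | IsFacet P F ∧ v ∈ F}.ncard = sdim P

/-- A polytope is simplicial if every facet contains precisely `dim P` vertices. -/
def IsSimplicialPolytope {n : ℕ} (P : Set (Fin n → ℝ)) : Prop :=
  ∀ F, IsFacet P F → {v | IsVertex P v ∧ v ∈ F}.ncard = sdim P

/-- Two vertices are complementary if no facet contains both. -/
def Complementary {n : ℕ} (P : Set (Fin n → ℝ)) (u v : Fin n → ℝ) : Prop :=
  ∀ F, IsFacet P F → ¬ (u ∈ F ∧ v ∈ F)

/-- `J` is the join `F ∨ G`: the smallest face of `P` containing both `F` and `G`. -/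
def IsJoin {n : ℕ} (P F G J : Set (Fin n → ℝ)) : Prop :=
  IsFace P J ∧ F ⊆ J ∧ G ⊆ J ∧ ∀ J', IsFace P J' → F ⊆ J' → G ⊆ J' → J ⊆ J'

/-!
Let `F` be a face of the simple polytope `P`, and label each vertex of `P` in `F` by the set of
facets through it that do not contain `F`. All label sets have the same size `m`. A face is the
intersection of the facets containing it, so `F = u ∨ v` exactly when the label sets of `u` and `v`
are disjoint. By simplicity, omitting one facet `H` at a vertex `u` leaves facets that meet in an
edge, so there is exactly one other vertex lying in all of them; if `F ⊄ H`, it belongs to `F`.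

If `F` is an edge, it has two vertices `u`, `w`, and `{u, w}` is the only pair. Conversely, let
`F = u ∨ v` with `u ≠ v`. If `m ≤ 1` then `F` is contained in an edge, hence is one. If `m ≥ 2`, a
Lemke-type parity argument (`parity_aux`) gives a second pair: fix a label `a` of `u`, let `T` be
the set of the remaining labels of `u` and `v`, and consider the unordered pairs of vertices whose
labels together cover `T`. Replacing one vertex of such a pair while keeping `T` covered is possible
in one way if the pair is disjoint and in two ways otherwise, so the number of disjoint pairs
covering `T` is even.

The geometric input is the local structure of `P` at a vertex `v` (`exists_localData`): the
functionals maximal at `v` form a cone generated by the facet normals at `v` (`polar_induction`).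
This cone spans the dual space and there are only `dim P` facets at `v`, so the facet normals form a
basis. The intersection properties of facets and the existence and uniqueness of neighbours follow
by evaluating on the dual basis.
-/

/-! ### Parity of complementary pairs -/

/-- Combinatorial core. Each `u ∈ V` carries a set `σ u` of `m ≥ 2` labels, and dropping one label
leads to exactly one other element of `V`. Then the pairs with disjoint label sets do not reduce to
a single unordered pair: fixing `a ∈ σ u₀`, the unordered disjoint pairs whose labels include
`T = (σ u₀ ∪ σ v₀) \ {a}` are even in number. -/
theorem parity_aux {α β : Type*} [DecidableEq α] [DecidableEq β]
    (V : Finset α) (σ : α → Finset β) (m : ℕ) (hm : 2 ≤ m)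
    (hcard : ∀ u ∈ V, (σ u).card = m)
    (piv : ∀ u ∈ V, ∀ b ∈ σ u, ∃ u' ∈ V, u' ≠ u ∧ (σ u).erase b ⊆ σ u' ∧
      ∀ w ∈ V, w ≠ u → (σ u).erase b ⊆ σ w → w = u')
    (u₀ v₀ : α) (hu₀ : u₀ ∈ V) (hv₀ : v₀ ∈ V) (hd : Disjoint (σ u₀) (σ v₀)) :
    ∃ u ∈ V, ∃ w ∈ V, Disjoint (σ u) (σ w) ∧ ¬ (u = u₀ ∧ w = v₀) ∧ ¬ (u = v₀ ∧ w = u₀) := by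
  have even_of_inv : ∀ (D : Finset (α × α)) (g : ∀ p ∈ D, α × α), (∀ p hp, g p hp ≠ p) →
      ∀ (hg : ∀ p hp, g p hp ∈ D), (∀ p hp, g (g p hp) (hg p hp) = p) → Even D.card := by
    intro D g h1 h2 h3
    have := Finset.sum_involution (s := D) (f := fun _ => (1 : ZMod 2)) g
      (fun _ _ => by decide) (fun p hp _ => h1 p hp) h2 h3
    simp only [Finset.sum_const, nsmul_eq_mul, mul_one] at this
    exact (ZMod.natCast_eq_zero_iff_even).1 this
  have piv' : ∀ R : Finset β, R.card + 1 = m → ∀ u ∈ V, R ⊆ σ u → ∃ u' ∈ V, u' ≠ u ∧ R ⊆ σ u' ∧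
      ∀ w ∈ V, w ≠ u → R ⊆ σ w → w = u' := by
    intro R hR u hu hRu
    have h1 : (σ u \ R).card = 1 := by
      rw [Finset.card_sdiff_of_subset hRu, hcard u hu]; omega
    obtain ⟨b, hb⟩ := Finset.card_eq_one.1 h1
    have hbu : b ∈ σ u := by
      have : b ∈ σ u \ R := by rw [hb]; simp
      exact (Finset.mem_sdiff.1 this).1
    have hRe : R = (σ u).erase b := by
      rw [Finset.erase_eq, ← hb, Finset.sdiff_sdiff_eq_self hRu]
    rw [hRe]
    exact piv u hu b hbu
  choose! π hπV hπne hπR hπuniq using piv'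
  obtain ⟨a, ha⟩ : (σ u₀).Nonempty := by
    rw [← Finset.card_pos, hcard u₀ hu₀]; omega
  set T : Finset β := (σ u₀).erase a ∪ σ v₀ with hT
  have hd' : Disjoint ((σ u₀).erase a) (σ v₀) := hd.mono_left (Finset.erase_subset _ _)
  have hTcard : T.card + 1 = 2 * m := by
    rw [hT, Finset.card_union_of_disjoint hd', Finset.card_erase_of_mem ha, hcard u₀ hu₀,
      hcard v₀ hv₀]; omega
  -- `D` consists of the ordered pairs whose first entry can be pivoted while all of `T` stays
  -- covered; pivoting is a fixed-point-free involution of `D`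
  set D : Finset (α × α) := (V ×ˢ V).filter
    (fun p => T \ σ p.2 ⊆ σ p.1 ∧ (T \ σ p.2).card + 1 = m) with hD
  have memD : ∀ p, p ∈ D ↔ (p.1 ∈ V ∧ p.2 ∈ V) ∧ T \ σ p.2 ⊆ σ p.1 ∧
      (T \ σ p.2).card + 1 = m := by
    intro p; simp [hD]
  have hDeven : Even D.card := by
    refine even_of_inv D (fun p _ => (π (T \ σ p.2) p.1, p.2)) ?_ ?_ ?_
    · intro p hp h
      obtain ⟨⟨h1, h2⟩, h3, h4⟩ := (memD p).1 hp
      exact hπne _ h4 _ h1 h3 (congrArg Prod.fst h)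
    · intro p hp
      obtain ⟨⟨h1, h2⟩, h3, h4⟩ := (memD p).1 hp
      exact (memD _).2 ⟨⟨hπV _ h4 _ h1 h3, h2⟩, hπR _ h4 _ h1 h3, h4⟩
    · intro p hp
      obtain ⟨⟨h1, h2⟩, h3, h4⟩ := (memD p).1 hp
      refine Prod.ext ?_ rfl
      exact (hπuniq _ h4 _ (hπV _ h4 _ h1 h3) (hπR _ h4 _ h1 h3) _ h1
        (hπne _ h4 _ h1 h3).symm h3).symm
  -- `B` consists of the pairs of `D` with both entries pivotable; swapping is a
  -- fixed-point-free involution of `B`, and the pairs in `D \ B` turn out to be disjoint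
  set B : Finset (α × α) := D.filter (fun p => p.swap ∈ D) with hB
  have hBeven : Even B.card := by
    refine even_of_inv B (fun p _ => p.swap) ?_ ?_ ?_
    · rintro ⟨u, w⟩ hp h
      have huw : w = u := congrArg Prod.fst h
      subst huw
      obtain ⟨⟨h1, h2⟩, h3, h4⟩ := (memD _).1 (Finset.mem_filter.1 hp).1
      simp only at h1 h2 h3 h4
      -- `T \ σ w` is contained in `σ w`, hence empty, although it has `m - 1 ≥ 1` elements
      have : T \ σ w = ∅ := by
        ext b; simp only [Finset.mem_sdiff, Finset.notMem_empty, iff_false]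
        intro hb
        exact hb.2 (h3 (Finset.mem_sdiff.2 hb))
      rw [this] at h4
      simp at h4; omega
    · intro p hp
      obtain ⟨h1, h2⟩ := Finset.mem_filter.1 hp
      exact Finset.mem_filter.2 ⟨h2, by simpa using h1⟩
    · intro p hp; simp
  have hABeven : Even (D \ B).card := by
    have := Finset.card_sdiff_add_card_eq_card (Finset.filter_subset (fun p => p.swap ∈ D) D)
    rw [← this, Nat.even_add] at hDeven
    exact hDeven.2 hBeven
  have hTu : T \ σ u₀ = σ v₀ := by
    ext b
    have : b ∈ σ u₀ → b ∉ σ v₀ := fun h => Finset.disjoint_left.1 hd h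
    simp only [hT, Finset.mem_sdiff, Finset.mem_union, Finset.mem_erase]
    tauto
  have hTv : T \ σ v₀ = (σ u₀).erase a := by
    rw [hT, Finset.union_sdiff_right, Finset.sdiff_eq_self_of_disjoint hd']
  have hswap : (v₀, u₀) ∉ D := by
    intro h
    have := ((memD _).1 h).2.2
    simp only [hTu, hcard v₀ hv₀] at this
    omega
  have h0 : (u₀, v₀) ∈ D \ B := by
    refine Finset.mem_sdiff.2 ⟨(memD _).2 ⟨⟨hu₀, hv₀⟩, ?_, ?_⟩, fun h => hswap ?_⟩
    · simp only [hTv]; exact Finset.erase_subset _ _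
    · simp only [hTv, Finset.card_erase_of_mem ha, hcard u₀ hu₀]; omega
    · exact (Finset.mem_filter.1 h).2
  have h1 : 1 < (D \ B).card := by
    have := Finset.card_pos.2 ⟨_, h0⟩
    obtain ⟨k, hk⟩ := hABeven
    omega
  obtain ⟨⟨u, w⟩, hp, hne⟩ := Finset.exists_mem_ne h1 (u₀, v₀)
  obtain ⟨hpD, hpB⟩ := Finset.mem_sdiff.1 hp
  obtain ⟨⟨hu, hw⟩, h3, h4⟩ := (memD _).1 hpD
  simp only at hu hw h3 h4
  refine ⟨u, hu, w, hw, ?_, ?_, ?_⟩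
  · have hnot : ¬ (T \ σ w ⊆ σ u ∧ (T \ σ u).card + 1 = m) := by
      rintro ⟨h5, h6⟩
      refine hpB (Finset.mem_filter.2 ⟨hpD, (memD _).2 ⟨⟨hw, hu⟩, ?_, h6⟩⟩)
      intro b hb
      by_contra hbw
      simp only [Prod.fst_swap, Prod.snd_swap, Finset.mem_sdiff] at hb hbw
      exact hb.2 (h5 (Finset.mem_sdiff.2 ⟨hb.1, hbw⟩))
    have h6 : (T \ σ u).card + 1 ≠ m := fun h => hnot ⟨h3, h⟩
    have e1 := Finset.card_sdiff_add_card_inter T (σ w)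
    have e2 := Finset.card_sdiff_add_card_inter T (σ u)
    have e3 : (T ∩ σ u).card ≤ m := by
      rw [← hcard u hu]; exact Finset.card_le_card Finset.inter_subset_right
    have hwT : T ∩ σ w = σ w :=
      Finset.eq_of_subset_of_card_le Finset.inter_subset_right (by rw [hcard w hw]; omega)
    have hsub : T \ σ w ⊆ T ∩ σ u := fun b hb =>
      Finset.mem_inter.2 ⟨(Finset.mem_sdiff.1 hb).1, h3 hb⟩
    have heq : T \ σ w = T ∩ σ u := Finset.eq_of_subset_of_card_le hsub (by omega)
    rw [Finset.disjoint_left]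
    intro b hbu hbw
    have hbT : b ∈ T := (Finset.mem_inter.1 (by rw [hwT]; exact hbw : b ∈ T ∩ σ w)).1
    have : b ∈ T \ σ w := heq ▸ Finset.mem_inter.2 ⟨hbT, hbu⟩
    exact (Finset.mem_sdiff.1 this).2 hbw
  · rintro ⟨rfl, rfl⟩; exact hne rfl
  · rintro ⟨rfl, rfl⟩; exact hswap hpD

/-! ### The polar of a finitely generated cone -/

theorem finrank_inf_ker_add_one {E : Type*} [AddCommGroup E] [Module ℝ E] [FiniteDimensional ℝ E]
    (U : Submodule ℝ E) (f : E →ₗ[ℝ] ℝ) (hf : ∃ y ∈ U, f y ≠ 0) :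
    Module.finrank ℝ ↥(U ⊓ LinearMap.ker f) + 1 = Module.finrank ℝ U := by
  obtain ⟨y, hy, hfy⟩ := hf
  have hne : f.domRestrict U ≠ 0 := fun h => hfy (by
    have := LinearMap.congr_fun h ⟨y, hy⟩
    simpa using this)
  rw [← Module.Dual.finrank_ker_add_one_of_ne_zero (f := f.domRestrict U) hne]
  congr 1
  have : (LinearMap.ker (f.domRestrict U)).map U.subtype = U ⊓ LinearMap.ker f := by
    ext x; simp only [Submodule.mem_map, LinearMap.mem_ker, Submodule.mem_inf]
    constructor
    · rintro ⟨z, hz, rfl⟩; exact ⟨z.2, hz⟩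
    · rintro ⟨h1, h2⟩; exact ⟨⟨x, h1⟩, h2, rfl⟩
  rw [← this]
  exact Submodule.finrank_map_subtype_eq U _

/-- Functionals vanishing on a common hyperplane `W` of `U` are proportional on `U`. -/
theorem eq_smul_of_vanish {E : Type*} [AddCommGroup E] [Module ℝ E] [FiniteDimensional ℝ E]
    (U W : Submodule ℝ E) (f g : E →ₗ[ℝ] ℝ) (hWU : W ≤ U)
    (hfr : Module.finrank ℝ W + 1 = Module.finrank ℝ U)
    (hfW : ∀ y ∈ W, f y = 0) (hgW : ∀ y ∈ W, g y = 0) (y₀ : E) (hy₀ : y₀ ∈ U) (hf : f y₀ ≠ 0) :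
    ∀ y ∈ U, g y = g y₀ / f y₀ * f y := by
  have hW : W = U ⊓ LinearMap.ker f := by
    refine Submodule.eq_of_le_of_finrank_eq (le_inf hWU fun y hy => hfW y hy) ?_
    have := finrank_inf_ker_add_one U f ⟨y₀, hy₀, hf⟩
    omega
  intro y hy
  have h1 : y - (f y / f y₀) • y₀ ∈ W := by
    rw [hW]
    refine ⟨U.sub_mem hy (U.smul_mem _ hy₀), ?_⟩
    simp [LinearMap.mem_ker, div_mul_cancel₀ _ hf]
  have h2 := hgW _ h1
  simp only [map_sub, map_smul, smul_eq_mul] at h2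
  have : g y = f y / f y₀ * g y₀ := by linarith
  rw [this]; ring

/-- Every functional nonpositive on a finite set `S` is, on the span of `S`, a nonnegative
combination of such functionals whose zeros in `S` span a hyperplane. This is stated as an
induction principle for predicates closed under sums and nonnegative multiples. -/
theorem polar_induction {E : Type*} [AddCommGroup E] [Module ℝ E] [FiniteDimensional ℝ E]
    (S : Finset E) (Q : (E →ₗ[ℝ] ℝ) → Prop)
    (hadd : ∀ f g, Q f → Q g → Q (f + g)) (hsmul : ∀ (c : ℝ) f, 0 ≤ c → Q f → Q (c • f))
    (hzero : ∀ f : E →ₗ[ℝ] ℝ, (∀ s ∈ S, f s = 0) → Q f)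
    (hbase : ∀ f : E →ₗ[ℝ] ℝ, (∀ s ∈ S, f s ≤ 0) → (∃ s ∈ S, f s < 0) →
      Module.finrank ℝ (Submodule.span ℝ {s : E | s ∈ S ∧ f s = 0}) + 1 =
        Module.finrank ℝ (Submodule.span ℝ (S : Set E)) → Q f)
    (f : E →ₗ[ℝ] ℝ) (hf : ∀ s ∈ S, f s ≤ 0) : Q f := by
  classical
  induction hN : (S.filter (fun s => f s < 0)).card using Nat.strong_induction_on generalizing f with
  | _ N ih =>
  subst hN
  by_cases hz : ∀ s ∈ S, f s = 0
  · exact hzero f hz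
  push Not at hz
  obtain ⟨s₀, hs₀, hfs₀⟩ := hz
  have hfs₀' : f s₀ < 0 := lt_of_le_of_ne (hf _ hs₀) hfs₀
  set U := Submodule.span ℝ (S : Set E) with hU
  set W := Submodule.span ℝ {s : E | s ∈ S ∧ f s = 0} with hW
  by_cases hdim : Module.finrank ℝ W + 1 = Module.finrank ℝ U
  · exact hbase f hf ⟨s₀, hs₀, hfs₀'⟩ hdim
  have hWle : W ≤ U ⊓ LinearMap.ker f := by
    rw [hW, Submodule.span_le]
    rintro s ⟨h1, h2⟩
    exact ⟨Submodule.subset_span h1, h2⟩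
  obtain ⟨y, hy, hyW⟩ : ∃ y ∈ U ⊓ LinearMap.ker f, y ∉ W := by
    by_contra hcon
    push Not at hcon
    have : W = U ⊓ LinearMap.ker f := le_antisymm hWle hcon
    apply hdim
    rw [this]
    exact finrank_inf_ker_add_one U f ⟨s₀, Submodule.subset_span hs₀, hfs₀⟩
  obtain ⟨g, hgy, hgW⟩ := Submodule.exists_dual_map_eq_bot_of_notMem hyW inferInstance
  have hgW' : ∀ z ∈ W, g z = 0 := by
    intro z hz
    have : g z ∈ W.map g := Submodule.mem_map_of_mem hz
    rw [hgW] at this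
    simpa using this
  -- extreme values of the ratio `g / f` over the generators on which `f` is nonzero
  set S' := S.filter (fun s => f s < 0) with hS'
  have hne : S'.Nonempty := ⟨s₀, Finset.mem_filter.2 ⟨hs₀, hfs₀'⟩⟩
  obtain ⟨a, ha, hamin⟩ := S'.exists_min_image (fun s => g s / f s) hne
  obtain ⟨b, hb, hbmax⟩ := S'.exists_max_image (fun s => g s / f s) hne
  have hzero_of : ∀ s ∈ S, s ∉ S' → f s = 0 ∧ g s = 0 := by
    intro s hs hs'
    have h1 : f s = 0 := by
      refine le_antisymm (hf s hs) (not_lt.1 fun h => hs' (Finset.mem_filter.2 ⟨hs, h⟩))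
    exact ⟨h1, hgW' s (Submodule.subset_span ⟨hs, h1⟩)⟩
  set l := g a / f a with hl
  set r := g b / f b with hr
  -- if all ratios agreed, `g` would equal `l • f` on `U` and vanish at `y`
  have hlr : l < r := by
    refine lt_of_le_of_ne (hamin b hb) fun heq => hgy ?_
    have hprop : ∀ s ∈ S, (g - l • f) s = 0 := by
      intro s hs
      by_cases hs' : s ∈ S'
      · have h1 : l ≤ g s / f s := hamin s hs'
        have h2 : g s / f s ≤ r := hbmax s hs'
        have h3 : g s / f s = l := by linarith
        have h4 : f s ≠ 0 := (Finset.mem_filter.1 hs').2.ne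
        rw [div_eq_iff h4] at h3
        simp [h3]
      · obtain ⟨h1, h2⟩ := hzero_of s hs hs'
        simp [h1, h2]
    have h5 : U ≤ LinearMap.ker (g - l • f) := by
      rw [hU, Submodule.span_le]; exact fun s hs => hprop s hs
    have h6 := h5 hy.1
    have h7 : f y = 0 := hy.2
    simpa [LinearMap.mem_ker, h7] using h6
  have step : ∀ k : E →ₗ[ℝ] ℝ, (∀ s ∈ S, k s ≤ 0) → (∀ s ∈ S, s ∉ S' → k s = 0) →
      (∃ s ∈ S', k s = 0) → Q k := by
    intro k hk hk0 hex
    refine ih _ ?_ k hk rfl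
    obtain ⟨s, hs, hks⟩ := hex
    refine Finset.card_lt_card ((Finset.ssubset_iff_of_subset ?_).2 ⟨s, hs, ?_⟩)
    · intro x hx
      obtain ⟨h1, h2⟩ := Finset.mem_filter.1 hx
      by_contra hx'
      exact h2.ne (hk0 x h1 hx')
    · simp [hks]
  have hQ1 : Q (g - l • f) := by
    refine step _ ?_ ?_ ⟨a, ha, ?_⟩
    · intro s hs
      by_cases hs' : s ∈ S'
      · have h1 : l ≤ g s / f s := hamin s hs'
        have h4 : f s < 0 := (Finset.mem_filter.1 hs').2
        rw [le_div_iff_of_neg h4] at h1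
        simpa using h1
      · obtain ⟨h1, h2⟩ := hzero_of s hs hs'
        simp [h1, h2]
    · intro s hs hs'
      obtain ⟨h1, h2⟩ := hzero_of s hs hs'
      simp [h1, h2]
    · have h4 : f a ≠ 0 := (Finset.mem_filter.1 ha).2.ne
      simp [hl, div_mul_cancel₀ _ h4]
  have hQ2 : Q (r • f - g) := by
    refine step _ ?_ ?_ ⟨b, hb, ?_⟩
    · intro s hs
      by_cases hs' : s ∈ S'
      · have h1 : g s / f s ≤ r := hbmax s hs'
        have h4 : f s < 0 := (Finset.mem_filter.1 hs').2
        rw [div_le_iff_of_neg h4] at h1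
        simpa using h1
      · obtain ⟨h1, h2⟩ := hzero_of s hs hs'
        simp [h1, h2]
    · intro s hs hs'
      obtain ⟨h1, h2⟩ := hzero_of s hs hs'
      simp [h1, h2]
    · have h4 : f b ≠ 0 := (Finset.mem_filter.1 hb).2.ne
      simp [hr, div_mul_cancel₀ _ h4]
  -- `f` is a positive multiple of the sum of `g - l • f` and `r • f - g`, each of which has
  -- more zeros in `S` than `f`
  have hfin : f = (r - l)⁻¹ • ((g - l • f) + (r • f - g)) := by
    have : (g - l • f) + (r • f - g) = (r - l) • f := by
      ext z; simp; ring
    rw [this, smul_smul, inv_mul_cancel₀ (sub_pos.2 hlr).ne', one_smul]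
  rw [hfin]
  exact hsmul _ _ (inv_nonneg.2 (sub_pos.2 hlr).le) (hadd _ _ hQ1 hQ2)

/-! ### Faces and vertices of a polytope -/

theorem IsFace.exists_functional {n : ℕ} {P F : Set (Fin n → ℝ)} (hF : IsFace P F)
    (hne : F.Nonempty) : ∃ (f : (Fin n → ℝ) →ₗ[ℝ] ℝ) (c : ℝ),
      (∀ x ∈ P, f x ≤ c) ∧ F = {x ∈ P | f x = c} := by
  rcases hF with h | h | h
  · exact absurd h hne.ne_empty
  · exact ⟨0, 0, by simp, by simp [h]⟩
  · exact h

theorem IsFace.subset {n : ℕ} {P F : Set (Fin n → ℝ)} (hF : IsFace P F) : F ⊆ P := by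
  rcases hF with rfl | rfl | ⟨f, c, -, rfl⟩
  · exact Set.empty_subset _
  · exact subset_rfl
  · exact fun x hx => hx.1

theorem IsVertex.mem {n : ℕ} {P : Set (Fin n → ℝ)} {v : Fin n → ℝ} (hv : IsVertex P v) : v ∈ P :=
  IsFace.subset hv rfl

theorem IsVertex.exists_functional {n : ℕ} {P : Set (Fin n → ℝ)} {v : Fin n → ℝ}
    (hv : IsVertex P v) : ∃ f : (Fin n → ℝ) →ₗ[ℝ] ℝ, ∀ x ∈ P, x ≠ v → f x < f v := by
  obtain ⟨f, c, hle, heq⟩ := IsFace.exists_functional hv (Set.singleton_nonempty v)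
  have hvc : f v = c := (heq ▸ Set.mem_singleton v : v ∈ {x ∈ P | f x = c}).2
  refine ⟨f, fun x hx hxv => lt_of_le_of_ne (hvc ▸ hle x hx) fun h => hxv ?_⟩
  have : x ∈ {x ∈ P | f x = c} := ⟨hx, h.trans hvc⟩
  rw [← heq] at this
  exact this

theorem IsVertex.eq_of_between {n : ℕ} {P : Set (Fin n → ℝ)} {w a b : Fin n → ℝ} {r : ℝ}
    (hw : IsVertex P w) (ha : a ∈ P) (hb : b ∈ P) (h0 : 0 < r) (h1 : r < 1)
    (h : w = a + r • (b - a)) : a = w := by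
  obtain ⟨f, hf⟩ := hw.exists_functional
  by_contra hne
  have h2 := hf a ha hne
  have h3 : f b ≤ f w := by
    by_cases hbw : b = w
    · rw [hbw]
    · exact (hf b hb hbw).le
  have h4 : f w = f a + r * (f b - f a) := by
    conv_lhs => rw [h]
    simp
  nlinarith

theorem le_of_le_convexHull {n : ℕ} (S : Finset (Fin n → ℝ)) (f : (Fin n → ℝ) →ₗ[ℝ] ℝ) (c : ℝ)
    (h : ∀ s ∈ S, f s ≤ c) : ∀ x ∈ convexHull ℝ (S : Set (Fin n → ℝ)), f x ≤ c :=
  fun _ hx => convexHull_min (t := {x | f x ≤ c}) (fun s hs => h s hs)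
    (convex_halfSpace_le f.isLinear c) hx

theorem isVertex_of_strict_max {n : ℕ} (S : Finset (Fin n → ℝ)) (f : (Fin n → ℝ) →ₗ[ℝ] ℝ)
    (w : Fin n → ℝ) (hw : w ∈ S) (h : ∀ s ∈ S, s ≠ w → f s < f w) :
    IsVertex (convexHull ℝ (S : Set (Fin n → ℝ))) w := by
  have hsub : convexHull ℝ (S : Set (Fin n → ℝ)) ⊆ {x | x = w ∨ f x < f w} := by
    refine convexHull_min (fun s hs => ?_) ?_
    · by_cases hsw : s = w
      · exact Or.inl hsw
      · exact Or.inr (h s hs hsw)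
    · intro x hx y hy a b ha hb hab
      have hx' : f x ≤ f w := by rcases hx with rfl | hx; exacts [le_rfl, hx.le]
      have hy' : f y ≤ f w := by rcases hy with rfl | hy; exacts [le_rfl, hy.le]
      have hb' : b = 1 - a := by linarith
      simp only [Set.mem_ofPred_eq, map_add, map_smul, smul_eq_mul]
      rcases ha.eq_or_lt with rfl | ha
      · have : b = 1 := by linarith
        subst this; simpa using hy
      rcases hb.eq_or_lt with rfl | hb
      · have : a = 1 := by linarith
        subst this; simpa using hx
      rcases hx with rfl | hx
      · rcases hy with rfl | hy
        · left; rw [← add_smul, hab, one_smul]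
        · right; subst hb'; nlinarith
      · right; subst hb'; nlinarith
  refine Or.inr (Or.inr ⟨f, f w, fun x hx => ?_, ?_⟩)
  · rcases hsub hx with rfl | hx; exacts [le_rfl, hx.le]
  · ext x; constructor
    · rintro rfl; exact ⟨subset_convexHull ℝ _ hw, rfl⟩
    · rintro ⟨hx, hfx⟩
      rcases hsub hx with h | h
      · exact h
      · exact absurd hfx h.ne

/-- A sufficiently small multiple of `g` does not disturb the strict inequalities `f s < c` over a
finite set. -/
theorem exists_perturb {n : ℕ} (S : Finset (Fin n → ℝ)) (f g : (Fin n → ℝ) →ₗ[ℝ] ℝ) (c d : ℝ) :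
    ∃ ε > 0, ∀ s ∈ S, f s < c → f s + ε * g s < c + ε * d := by
  have h : ∀ᶠ ε in nhdsWithin (0 : ℝ) (Set.Ioi 0), ∀ s ∈ S, f s < c →
      f s + ε * g s < c + ε * d := by
    refine (Filter.eventually_all_finset S).2 fun s _ => ?_
    by_cases hs : f s < c
    · have h1 : Filter.Tendsto (fun ε : ℝ => f s + ε * g s) (nhds 0) (nhds (f s + 0 * g s)) :=
        Continuous.tendsto (by fun_prop) 0
      have h2 : Filter.Tendsto (fun ε : ℝ => c + ε * d) (nhds 0) (nhds (c + 0 * d)) :=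
        Continuous.tendsto (by fun_prop) 0
      have := (h1.eventually_lt h2 (by simpa using hs)).filter_mono
        (nhdsWithin_le_nhds (s := Set.Ioi (0 : ℝ)))
      filter_upwards [this] with ε hε _ using hε
    · exact Filter.Eventually.of_forall fun ε h => absurd h hs
  obtain ⟨ε, h1, h2⟩ := (h.and self_mem_nhdsWithin).exists
  exact ⟨ε, h2, h1⟩

/-- A face with a point other than `p` has a vertex of the polytope other than `p`: the generator
on the face farthest from `p`. -/
theorem exists_vertex_ne {n : ℕ} (S : Finset (Fin n → ℝ)) {F : Set (Fin n → ℝ)}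
    (hF : IsFace (convexHull ℝ (S : Set (Fin n → ℝ))) F) (p x : Fin n → ℝ) (hx : x ∈ F)
    (hxp : x ≠ p) : ∃ w ∈ F, IsVertex (convexHull ℝ (S : Set (Fin n → ℝ))) w ∧ w ≠ p := by
  classical
  obtain ⟨f, c, hle, rfl⟩ := hF.exists_functional ⟨x, hx⟩
  set S' := S.filter (fun s => f s = c) with hS'
  have hleS : ∀ s ∈ S, f s ≤ c := fun s hs => hle s (subset_convexHull ℝ _ hs)
  -- a generator on the face other than `p` exists, since otherwise `f < c` or a perturbation
  -- of `f` would exclude `x`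
  have hex : ∃ s ∈ S', s ≠ p := by
    by_contra hcon
    push Not at hcon
    by_cases hp : p ∈ S'
    · obtain ⟨hpS, hpc⟩ := Finset.mem_filter.1 hp
      have hlt : ∀ s ∈ S, s ≠ p → f s < f p := by
        intro s hs hsp
        rw [hpc]
        exact lt_of_le_of_ne (hleS s hs) fun h => hsp (hcon s (Finset.mem_filter.2 ⟨hs, h⟩))
      obtain ⟨ε, hε, hpert⟩ := exists_perturb S f
        (∑ i, (x i - p i) • LinearMap.proj i) c
        ((∑ i, (x i - p i) • LinearMap.proj i : (Fin n → ℝ) →ₗ[ℝ] ℝ) p)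
      set g : (Fin n → ℝ) →ₗ[ℝ] ℝ := ∑ i, (x i - p i) • LinearMap.proj i with hg
      have h1 : ∀ s ∈ S, (f + ε • g) s ≤ c + ε * g p := by
        intro s hs
        by_cases hsp : s = p
        · subst hsp; simp [hpc]
        · simpa using (hpert s hs (hpc ▸ hlt s hs hsp)).le
      have h2 := le_of_le_convexHull S _ _ h1 x hx.1
      have h3 : f x = c := hx.2
      simp only [LinearMap.add_apply, LinearMap.smul_apply, smul_eq_mul, h3] at h2
      have h4 : g x ≤ g p := by
        have : ε * g x ≤ ε * g p := by linarith
        exact le_of_mul_le_mul_left this hε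
      have h5 : g x - g p = ∑ i, (x i - p i) ^ 2 := by
        simp only [hg, LinearMap.sum_apply, LinearMap.smul_apply, LinearMap.proj_apply,
          smul_eq_mul, ← Finset.sum_sub_distrib]
        exact Finset.sum_congr rfl fun i _ => by ring
      have h6 : ∑ i, (x i - p i) ^ 2 = 0 :=
        le_antisymm (by linarith) (Finset.sum_nonneg fun i _ => sq_nonneg _)
      apply hxp
      funext i
      have := (Finset.sum_eq_zero_iff_of_nonneg (fun i _ => sq_nonneg (x i - p i))).1 h6 i
        (Finset.mem_univ i)
      exact sub_eq_zero.1 (pow_eq_zero_iff two_ne_zero |>.1 this)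
    · have hlt : ∀ s ∈ S, f s < c := by
        intro s hs
        refine lt_of_le_of_ne (hleS s hs) fun h => hp ?_
        have hsS' : s ∈ S' := Finset.mem_filter.2 ⟨hs, h⟩
        rwa [← hcon s hsS']
      have h1 := convexHull_min (t := {y | f y < c}) (fun s hs => hlt s hs)
        (convex_halfSpace_lt f.isLinear c) hx.1
      exact h1.ne hx.2
  -- a generator on the face farthest from `p` is a vertex
  set N : (Fin n → ℝ) → ℝ := fun s => ∑ i, (s i - p i) ^ 2 with hN
  obtain ⟨s₁, hs₁, hs₁p⟩ := hex
  obtain ⟨w, hw, hmax⟩ := S'.exists_max_image N ⟨s₁, hs₁⟩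
  obtain ⟨hwS, hwc⟩ := Finset.mem_filter.1 hw
  have hNpos : ∀ a b : Fin n → ℝ, a ≠ b → 0 < ∑ i, (a i - b i) ^ 2 := by
    intro a b hab
    obtain ⟨i, hi⟩ := Function.ne_iff.1 hab
    exact Finset.sum_pos' (fun i _ => sq_nonneg _) ⟨i, Finset.mem_univ i,
      by have := sub_ne_zero.2 hi; positivity⟩
  refine ⟨w, ⟨subset_convexHull ℝ _ hwS, hwc⟩, ?_, ?_⟩
  · set g : (Fin n → ℝ) →ₗ[ℝ] ℝ := ∑ i, (w i - p i) • LinearMap.proj i with hg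
    have hgs : ∀ s ∈ S', s ≠ w → g s < g w := by
      intro s hs hsw
      have h1 := hmax s hs
      have h2 := hNpos s w hsw
      have h3 : g w - g s = ((N w - N s) + ∑ i, (s i - w i) ^ 2) / 2 := by
        simp only [hg, hN, LinearMap.sum_apply, LinearMap.smul_apply, LinearMap.proj_apply,
          smul_eq_mul, ← Finset.sum_sub_distrib, ← Finset.sum_add_distrib, Finset.sum_div]
        exact Finset.sum_congr rfl fun i _ => by ring
      linarith
    obtain ⟨ε, hε, hpert⟩ := exists_perturb S f g c (g w)
    refine isVertex_of_strict_max S (f + ε • g) w hwS fun s hs hsw => ?_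
    simp only [LinearMap.add_apply, LinearMap.smul_apply, smul_eq_mul, hwc]
    rcases (hleS s hs).lt_or_eq with h | h
    · exact hpert s hs h
    · have := mul_lt_mul_of_pos_left (hgs s (Finset.mem_filter.2 ⟨hs, h⟩) hsw) hε
      linarith
  · rintro rfl
    have h1 := hmax s₁ hs₁
    have h2 := hNpos s₁ w hs₁p
    simp only [hN, sub_self] at h1
    simp at h1
    linarith

/-! ### The cone of a simple polytope at a vertex -/

/-- The facet structure of `P` at `v`: `Φ` is the set of facets through `v`, and `h H` is a linear
functional whose maximum over `P` is attained exactly on `H ∈ Φ`. The functionals `h H` generate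
(up to functionals constant on `P`) the cone of all functionals maximal at `v`, and form a basis of
the dual of `vectorSpan ℝ P`; the latter is recorded by `inj` and by the existence of a dual basis
up to sign. The value of `h` outside `Φ` is irrelevant. -/
structure LocalData {n : ℕ} (P : Set (Fin n → ℝ)) (v : Fin n → ℝ)
    (Φ : Finset (Set (Fin n → ℝ))) (h : Set (Fin n → ℝ) → (Fin n → ℝ) →ₗ[ℝ] ℝ) : Prop where
  mem : ∀ H, H ∈ Φ ↔ IsFacet P H ∧ v ∈ H
  card : Φ.card = sdim P
  le : ∀ H ∈ Φ, ∀ x ∈ P, h H x ≤ h H v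
  eq : ∀ H ∈ Φ, H = {x ∈ P | h H x = h H v}
  gen : ∀ f : (Fin n → ℝ) →ₗ[ℝ] ℝ, (∀ x ∈ P, f x ≤ f v) → ∃ c : Set (Fin n → ℝ) → ℝ,
    (∀ H, 0 ≤ c H) ∧ ∀ y ∈ vectorSpan ℝ P, f y = ∑ H ∈ Φ, c H * h H y
  inj : ∀ y ∈ vectorSpan ℝ P, (∀ H ∈ Φ, h H y = 0) → y = 0
  dual : ∀ H ∈ Φ, ∃ e ∈ vectorSpan ℝ P, h H e = -1 ∧ ∀ H' ∈ Φ, H' ≠ H → h H' e = 0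

theorem IsFacet.exists_functional {n : ℕ} {P H : Set (Fin n → ℝ)} (hH : IsFacet P H)
    {v : Fin n → ℝ} (hv : v ∈ H) : ∃ f : (Fin n → ℝ) →ₗ[ℝ] ℝ,
      (∀ x ∈ P, f x ≤ f v) ∧ H = {x ∈ P | f x = f v} := by
  obtain ⟨f, c, hle, heq⟩ := hH.1.exists_functional hH.2.1
  have hvc : f v = c := (heq ▸ hv : v ∈ {x ∈ P | f x = c}).2
  exact ⟨f, by rwa [hvc], by rwa [hvc]⟩

theorem finite_facets {n : ℕ} {P : Set (Fin n → ℝ)} (hs : IsSimplePolytope P) {v : Fin n → ℝ}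
    (hv : IsVertex P v) : {F | IsFacet P F ∧ v ∈ F}.Finite := by
  by_cases h : sdim P = 0
  · convert Set.finite_empty
    ext F
    simp only [Set.mem_ofPred_eq, Set.mem_empty_iff_false, iff_false]
    rintro ⟨⟨-, -, h1⟩, -⟩
    omega
  · exact Set.finite_of_ncard_ne_zero (by rw [hs v hv]; exact h)

theorem IsVertex.mem_generators {n : ℕ} {S : Finset (Fin n → ℝ)} {v : Fin n → ℝ}
    (hv : IsVertex (convexHull ℝ (S : Set (Fin n → ℝ))) v) : v ∈ S := by
  by_contra hvS
  obtain ⟨f, hf⟩ := hv.exists_functional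
  have hlt : ∀ s ∈ S, f s < f v := fun s hs =>
    hf s (subset_convexHull ℝ _ hs) (by rintro rfl; exact hvS hs)
  have : f v < f v := convexHull_min (t := {y | f y < f v}) (fun s hs => hlt s hs)
    (convex_halfSpace_lt f.isLinear _) hv.mem
  exact lt_irrefl _ this

/-- A simple polytope has the expected structure at each vertex. The facet normals generate the
polar cone by `polar_induction`; as `{v}` is a face, that cone spans the dual space, and there are
only `sdim P` facets at `v`, so their normals form a basis. -/
theorem exists_localData {n : ℕ} {P : Set (Fin n → ℝ)} (hP : IsPolytope P)
    (hs : IsSimplePolytope P) {v : Fin n → ℝ} (hv : IsVertex P v) :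
    ∃ Φ h, LocalData P v Φ h := by
  classical
  obtain ⟨S₀, rfl⟩ := hP
  set P := convexHull ℝ (S₀ : Set (Fin n → ℝ)) with hPdef
  have hvP := hv.mem
  have hvS₀ := hv.mem_generators
  have hS₀P : ∀ s ∈ S₀, s ∈ P := fun s h => subset_convexHull ℝ _ h
  set Φ := (finite_facets hs hv).toFinset with hΦ
  have hmem : ∀ H, H ∈ Φ ↔ IsFacet P H ∧ v ∈ H := by simp [hΦ]
  have hcard : Φ.card = sdim P := by
    rw [← hs v hv, Set.ncard_eq_toFinset_card _ (finite_facets hs hv)]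
  have hex : ∀ H, ∃ f : (Fin n → ℝ) →ₗ[ℝ] ℝ, H ∈ Φ →
      (∀ x ∈ P, f x ≤ f v) ∧ H = {x ∈ P | f x = f v} := by
    intro H
    by_cases hH : H ∈ Φ
    · obtain ⟨h1, h2⟩ := (hmem H).1 hH
      obtain ⟨f, hf⟩ := h1.exists_functional h2
      exact ⟨f, fun _ => hf⟩
    · exact ⟨0, fun h => absurd h hH⟩
  choose h hh using hex
  set S := S₀.image (fun s => s - v) with hS
  have hspan : Submodule.span ℝ (S : Set (Fin n → ℝ)) = vectorSpan ℝ P := by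
    rw [← direction_affineSpan, hPdef, affineSpan_convexHull, direction_affineSpan,
      vectorSpan_eq_span_vsub_set_right ℝ (Finset.mem_coe.2 hvS₀), hS, Finset.coe_image]
    rfl
  have hlin : ∀ f : (Fin n → ℝ) →ₗ[ℝ] ℝ, (∀ x ∈ P, f x ≤ f v) ↔ ∀ s ∈ S, f s ≤ 0 := by
    intro f
    constructor
    · intro hf s hs
      obtain ⟨t, ht, rfl⟩ := Finset.mem_image.1 hs
      simpa using hf t (hS₀P t ht)
    · intro hf
      refine le_of_le_convexHull S₀ f _ fun s hs => ?_
      simpa using hf (s - v) (Finset.mem_image_of_mem _ hs)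
  have hsubV : ∀ x ∈ P, x - v ∈ vectorSpan ℝ P := fun x hx => vsub_mem_vectorSpan ℝ hx hvP
  have hzeroV : ∀ f : (Fin n → ℝ) →ₗ[ℝ] ℝ, (∀ s ∈ S, f s = 0) → ∀ y ∈ vectorSpan ℝ P, f y = 0 := by
    intro f hf y hy
    rw [← hspan] at hy
    have : Submodule.span ℝ (S : Set (Fin n → ℝ)) ≤ LinearMap.ker f :=
      Submodule.span_le.2 fun s hs => hf s hs
    exact this hy
  have hgen : ∀ f : (Fin n → ℝ) →ₗ[ℝ] ℝ, (∀ s ∈ S, f s ≤ 0) → ∃ c : Set (Fin n → ℝ) → ℝ,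
      (∀ H, 0 ≤ c H) ∧ ∀ y ∈ vectorSpan ℝ P, f y = ∑ H ∈ Φ, c H * h H y := by
    refine polar_induction S _ ?_ ?_ ?_ ?_
    · rintro f g ⟨c, hc, hfc⟩ ⟨d, hd, hgd⟩
      refine ⟨fun H => c H + d H, fun H => add_nonneg (hc H) (hd H), fun y hy => ?_⟩
      simp [hfc y hy, hgd y hy, add_mul, Finset.sum_add_distrib]
    · rintro a f ha ⟨c, hc, hfc⟩
      refine ⟨fun H => a * c H, fun H => mul_nonneg ha (hc H), fun y hy => ?_⟩
      simp [hfc y hy, mul_assoc, Finset.mul_sum]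
    · intro f hf
      refine ⟨0, fun _ => le_rfl, fun y hy => ?_⟩
      simp [hzeroV f hf y hy]
    · intro f hf hfne hdim
      rw [hspan] at hdim
      set W := Submodule.span ℝ {s | s ∈ S ∧ f s = 0} with hW
      have hfP := (hlin f).2 hf
      set H : Set (Fin n → ℝ) := {x ∈ P | f x = f v} with hH
      have hvH : v ∈ H := ⟨hvP, rfl⟩
      have hWV : W ≤ vectorSpan ℝ P := by
        rw [← hspan]; exact Submodule.span_mono fun s hs => hs.1
      have hfW : ∀ y ∈ W, f y = 0 := by
        have : W ≤ LinearMap.ker f := Submodule.span_le.2 fun s hs => hs.2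
        exact fun y hy => this hy
      obtain ⟨s₀, hs₀, hfs₀⟩ := hfne
      have hs₀V : s₀ ∈ vectorSpan ℝ P := by rw [← hspan]; exact Submodule.subset_span hs₀
      have hHW : vectorSpan ℝ H = W := by
        have hle : W ≤ vectorSpan ℝ H := by
          refine Submodule.span_le.2 ?_
          rintro s ⟨hs, hfs⟩
          obtain ⟨t, ht, rfl⟩ := Finset.mem_image.1 hs
          refine vsub_mem_vectorSpan ℝ (⟨hS₀P t ht, ?_⟩ : t ∈ H) hvH
          simpa [sub_eq_zero] using hfs
        have hle2 : vectorSpan ℝ H ≤ vectorSpan ℝ P ⊓ LinearMap.ker f := by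
          rw [vectorSpan_eq_span_vsub_set_right ℝ hvH]
          refine Submodule.span_le.2 ?_
          rintro _ ⟨x, hx, rfl⟩
          refine ⟨hsubV x hx.1, ?_⟩
          have := hx.2
          simp [LinearMap.mem_ker, this]
        refine (Submodule.eq_of_le_of_finrank_le hle ?_).symm
        have h1 := Submodule.finrank_mono hle2
        have h2 := finrank_inf_ker_add_one (vectorSpan ℝ P) f ⟨s₀, hs₀V, hfs₀.ne⟩
        omega
      have hHfacet : IsFacet P H :=
        ⟨Or.inr (Or.inr ⟨f, f v, hfP, rfl⟩), ⟨v, hvH⟩, by rw [sdim, sdim, hHW]; exact hdim⟩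
      have hHΦ : H ∈ Φ := (hmem H).2 ⟨hHfacet, hvH⟩
      obtain ⟨hle, heq⟩ := hh H hHΦ
      have hhS := (hlin (h H)).1 hle
      obtain ⟨s₁, hs₁, hs₁ne⟩ : ∃ s ∈ S, h H s ≠ 0 := by
        by_contra hcon
        push Not at hcon
        have h1 := hzeroV _ hcon
        have : H = P := by
          rw [heq]
          ext x
          refine ⟨fun hx => hx.1, fun hx => ⟨hx, ?_⟩⟩
          simpa [sub_eq_zero] using h1 _ (hsubV x hx)
        have h2 := hHfacet.2.2
        rw [this] at h2
        omega
      have hhW : ∀ y ∈ W, h H y = 0 := by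
        have : W ≤ LinearMap.ker (h H) := by
          refine Submodule.span_le.2 ?_
          rintro s ⟨hs, hfs⟩
          obtain ⟨t, ht, rfl⟩ := Finset.mem_image.1 hs
          have htH : t ∈ H := ⟨hS₀P t ht, by simpa [sub_eq_zero] using hfs⟩
          rw [heq] at htH
          have := htH.2
          simp [LinearMap.mem_ker, this]
        exact fun y hy => this hy
      have hs₁V : s₁ ∈ vectorSpan ℝ P := by rw [← hspan]; exact Submodule.subset_span hs₁
      have hprop := eq_smul_of_vanish _ W (h H) f hWV hdim hhW hfW s₁ hs₁V hs₁ne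
      refine ⟨Pi.single H (f s₁ / h H s₁), fun H' => ?_, fun y hy => ?_⟩
      · by_cases hHH : H' = H
        · subst hHH
          simpa using div_nonneg_of_nonpos (hf s₁ hs₁) (hhS s₁ hs₁)
        · simp [hHH]
      · rw [hprop y hy, Finset.sum_eq_single H]
        · simp
        · intro H' _ hne; simp [hne]
        · intro hn; exact absurd hHΦ hn
  have hinj : ∀ y ∈ vectorSpan ℝ P, (∀ H ∈ Φ, h H y = 0) → y = 0 := by
    intro y hy hy0
    have hpol : ∀ f : (Fin n → ℝ) →ₗ[ℝ] ℝ, (∀ s ∈ S, f s ≤ 0) → f y = 0 := by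
      intro f hf
      obtain ⟨c, -, hc⟩ := hgen f hf
      rw [hc y hy]
      exact Finset.sum_eq_zero fun H hH => by rw [hy0 H hH, mul_zero]
    obtain ⟨f₀, hf₀⟩ := hv.exists_functional
    have h1 := hpol f₀ ((hlin f₀).1 fun x hx => by
      by_cases hxv : x = v
      · rw [hxv]
      · exact (hf₀ x hx hxv).le)
    -- the polar cone has the interior point `f₀`, so every `g` is a difference of its elements
    have hall : ∀ g : (Fin n → ℝ) →ₗ[ℝ] ℝ, g y = 0 := by
      intro g
      obtain ⟨ε, hε, hpert⟩ := exists_perturb S f₀ g 0 0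
      have h2 := hpol (f₀ + ε • g) fun s hs => by
        obtain ⟨t, ht, rfl⟩ := Finset.mem_image.1 hs
        by_cases htv : t = v
        · subst htv; simp
        · have := hpert _ hs (by simpa using hf₀ t (hS₀P t ht) htv)
          simpa using this.le
      simp only [LinearMap.add_apply, LinearMap.smul_apply, smul_eq_mul, h1, zero_add] at h2
      exact (mul_eq_zero.1 h2).resolve_left hε.ne'
    funext i
    exact hall (LinearMap.proj i)
  refine ⟨Φ, h, hmem, hcard, fun H hH => (hh H hH).1, fun H hH => (hh H hH).2,
    fun f hf => hgen f ((hlin f).1 hf), hinj, ?_⟩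
  intro H hH
  let L : vectorSpan ℝ P →ₗ[ℝ] (Φ → ℝ) := LinearMap.pi fun K => (h K.1).domRestrict _
  have hLinj : Function.Injective L := by
    rw [← LinearMap.ker_eq_bot, LinearMap.ker_eq_bot']
    intro y hy
    have : (y : Fin n → ℝ) = 0 := hinj y y.2 fun K hK => congrFun hy ⟨K, hK⟩
    exact Subtype.ext this
  have hLsurj : Function.Surjective L := by
    refine (LinearMap.injective_iff_surjective_of_finrank_eq_finrank ?_).1 hLinj
    rw [Module.finrank_pi, Fintype.card_coe, hcard, sdim]
  obtain ⟨e, he⟩ := hLsurj (Pi.single ⟨H, hH⟩ (-1))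
  refine ⟨e, e.2, ?_, fun H' hH' hne => ?_⟩
  · have := congrFun he ⟨H, hH⟩
    simpa [L] using this
  · have := congrFun he ⟨H', hH'⟩
    rw [Pi.single_eq_of_ne (by simpa [Subtype.ext_iff] using hne)] at this
    exact this

/-! ### Faces, neighbours and joins near a vertex -/

section LocalData

variable {n : ℕ} {P F : Set (Fin n → ℝ)} {v : Fin n → ℝ} {Φ : Finset (Set (Fin n → ℝ))}
  {h : Set (Fin n → ℝ) → (Fin n → ℝ) →ₗ[ℝ] ℝ}

theorem LocalData.apply_eq_zero_iff (D : LocalData P v Φ h) {H : Set (Fin n → ℝ)} (hH : H ∈ Φ)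
    {x : Fin n → ℝ} (hx : x ∈ P) : h H (x - v) = 0 ↔ x ∈ H := by
  constructor
  · intro h0
    rw [D.eq H hH]
    exact ⟨hx, by simpa [sub_eq_zero] using h0⟩
  · intro h0
    rw [D.eq H hH] at h0
    have := h0.2
    simp [this]

theorem LocalData.eq_of_mem_all (D : LocalData P v Φ h) (hv : v ∈ P)
    {x : Fin n → ℝ} (hx : x ∈ P) (hall : ∀ H ∈ Φ, x ∈ H) : x = v :=
  sub_eq_zero.1 (D.inj _ (vsub_mem_vectorSpan ℝ hx hv)
    fun H hH => (D.apply_eq_zero_iff hH hx).2 (hall H hH))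

/-- A face through `v` is cut out of `P` by the facets containing it: the functional exposing the
face is a nonnegative combination of facet normals at `v`, and a normal occurring with a positive
coefficient vanishes on the whole face. -/
theorem LocalData.mem_face (D : LocalData P v Φ h) (hF : IsFace P F) (hv : v ∈ F)
    {x : Fin n → ℝ} (hx : x ∈ P) (hall : ∀ H ∈ Φ, F ⊆ H → x ∈ H) : x ∈ F := by
  obtain ⟨f, c, hle, rfl⟩ := hF.exists_functional ⟨v, hv⟩
  obtain ⟨hvP, rfl⟩ := hv
  obtain ⟨a, ha, haf⟩ := D.gen f hle
  refine ⟨hx, sub_eq_zero.1 ?_⟩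
  rw [← map_sub, haf (x - v) (vsub_mem_vectorSpan ℝ hx hvP)]
  refine Finset.sum_eq_zero fun H hH => ?_
  by_cases haH : a H = 0
  · rw [haH, zero_mul]
  rw [(D.apply_eq_zero_iff hH hx).2, mul_zero]
  refine hall H hH fun y hy => ?_
  have h1 : ∑ H ∈ Φ, a H * h H (y - v) = 0 := by
    rw [← haf (y - v) (vsub_mem_vectorSpan ℝ hy.1 hvP), map_sub, hy.2, sub_self]
  have h2 := (Finset.sum_eq_zero_iff_of_nonpos (fun K hK =>
    mul_nonpos_of_nonneg_of_nonpos (ha K) (by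
      simpa using D.le K hK y hy.1))).1 h1 H hH
  exact (D.apply_eq_zero_iff hH hy.1).1 ((mul_eq_zero.1 h2).resolve_left haH)

/-- The facets at `v` other than `H` meet in a face containing a vertex other than `v`: the far
end of the edge leaving `H`. -/
theorem LocalData.exists_neighbor (D : LocalData P v Φ h) (hP : IsPolytope P) (hv : v ∈ P)
    {H : Set (Fin n → ℝ)} (hH : H ∈ Φ) :
    ∃ w, IsVertex P w ∧ w ≠ v ∧ ∀ K ∈ Φ, K ≠ H → w ∈ K := by
  classical
  obtain ⟨S, rfl⟩ := hP
  set P := convexHull ℝ (S : Set (Fin n → ℝ)) with hPdef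
  set f : (Fin n → ℝ) →ₗ[ℝ] ℝ := ∑ K ∈ Φ.erase H, h K with hf
  have hfx : ∀ x, f x = ∑ K ∈ Φ.erase H, h K x := fun x => by simp [hf]
  have hfle : ∀ x ∈ P, f x ≤ f v := fun x hx => by
    rw [hfx, hfx]
    exact Finset.sum_le_sum fun K hK => D.le K (Finset.mem_of_mem_erase hK) x hx
  have hface : IsFace P {x ∈ P | f x = f v} := Or.inr (Or.inr ⟨f, f v, hfle, rfl⟩)
  obtain ⟨x, hx, hxv⟩ : ∃ x ∈ {x ∈ P | f x = f v}, x ≠ v := by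
    by_contra hcon
    push Not at hcon
    -- otherwise `f - ε • h H` still attains its maximum over `P` at `v`, although its
    -- coefficient along `h H` is negative
    obtain ⟨ε, hε, hpert⟩ := exists_perturb S f (-h H) (f v) (-h H v)
    have hmax : ∀ x ∈ P, (f + ε • (-h H)) x ≤ (f + ε • (-h H)) v := by
      refine le_of_le_convexHull S _ _ fun s hs => ?_
      by_cases hsv : s = v
      · rw [hsv]
      · have hsP : s ∈ P := subset_convexHull ℝ _ hs
        have hlt : f s < f v := lt_of_le_of_ne (hfle s hsP) fun h => hsv (hcon s ⟨hsP, h⟩)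
        simpa using (hpert s hs hlt).le
    obtain ⟨c, hc, hcf⟩ := D.gen _ hmax
    obtain ⟨e, he, he1, he0⟩ := D.dual H hH
    have h1 := hcf e he
    have h2 : f e = 0 := by
      rw [hfx]
      exact Finset.sum_eq_zero fun K hK =>
        he0 K (Finset.mem_of_mem_erase hK) (Finset.ne_of_mem_erase hK)
    rw [Finset.sum_eq_single H (fun K hK hne => by rw [he0 K hK hne, mul_zero])
      (fun hn => absurd hH hn)] at h1
    simp [h2, he1] at h1
    have := hc H
    linarith
  obtain ⟨w, hw, hwv, hne⟩ := exists_vertex_ne S hface v x hx hxv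
  refine ⟨w, hwv, hne, fun K hK hKH => ?_⟩
  have h1 := hw.2
  rw [hfx, hfx] at h1
  have h2 := (Finset.sum_eq_sum_iff_of_le fun K hK =>
    D.le K (Finset.mem_of_mem_erase hK) w hw.1).1 h1 K (Finset.mem_erase.2 ⟨hKH, hK⟩)
  rw [D.eq K hK]
  exact ⟨hw.1, h2⟩

/-- The points of `P` common to all facets at `v` other than `H` lie on a ray from `v`. -/
theorem LocalData.exists_direction (D : LocalData P v Φ h) (hv : v ∈ P)
    {H : Set (Fin n → ℝ)} (hH : H ∈ Φ) :
    ∃ e : Fin n → ℝ, ∀ x ∈ P, (∀ K ∈ Φ, K ≠ H → x ∈ K) → ∃ t : ℝ, 0 ≤ t ∧ x - v = t • e := by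
  obtain ⟨e, he, he1, he0⟩ := D.dual H hH
  refine ⟨e, fun x hx hall => ⟨-h H (x - v), ?_, ?_⟩⟩
  · simpa using D.le H hH x hx
  · have hxV : x - v ∈ vectorSpan ℝ P := vsub_mem_vectorSpan ℝ hx hv
    refine sub_eq_zero.1 (D.inj _ (Submodule.sub_mem _ hxV (Submodule.smul_mem _ _ he)) ?_)
    intro K hK
    rw [(h K).map_sub, (h K).map_smul, smul_eq_mul]
    by_cases hKH : K = H
    · subst hKH; rw [he1]; ring
    · rw [he0 K hK hKH, (D.apply_eq_zero_iff hK hx).2 (hall K hK hKH)]; ring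

/-- An edge at `v` has only one further vertex, since of two distinct ones on the same ray the
nearer would lie strictly between `v` and the farther. -/
theorem LocalData.neighbor_unique (D : LocalData P v Φ h) (hv : IsVertex P v)
    {H : Set (Fin n → ℝ)} (hH : H ∈ Φ) {w w' : Fin n → ℝ}
    (hw : IsVertex P w) (hwv : w ≠ v) (hwK : ∀ K ∈ Φ, K ≠ H → w ∈ K)
    (hw' : IsVertex P w') (hwv' : w' ≠ v) (hwK' : ∀ K ∈ Φ, K ≠ H → w' ∈ K) : w = w' := by
  obtain ⟨e, he⟩ := D.exists_direction hv.mem hH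
  obtain ⟨t, ht, hte⟩ := he w hw.mem hwK
  obtain ⟨t', ht', hte'⟩ := he w' hw'.mem hwK'
  have key : ∀ (a b : Fin n → ℝ) (r s : ℝ), IsVertex P a → a ≠ v → b ∈ P → 0 ≤ r →
      a - v = r • e → b - v = s • e → ¬ r < s := by
    intro a b r s ha hav hb hr hra hsb hlt
    have hr0 : r ≠ 0 := by
      rintro rfl
      exact hav (sub_eq_zero.1 (by rw [hra, zero_smul]))
    have hr' : 0 < r := lt_of_le_of_ne hr hr0.symm
    have hs : 0 < s := hr'.trans hlt
    refine hav (ha.eq_of_between hv.mem hb (div_pos hr' hs) ((div_lt_one hs).2 hlt) ?_).symm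
    rw [hsb, smul_smul, div_mul_cancel₀ _ hs.ne', ← hra]
    abel
  have h1 := key w w' t t' hw hwv hw'.mem ht hte hte'
  have h2 := key w' w t' t hw' hwv' hw.mem ht' hte' hte
  have : t = t' := by linarith
  have h3 : w - v = w' - v := by rw [hte, hte', this]
  exact sub_left_injective h3

theorem sdim_pos {u w : Fin n → ℝ} (hu : u ∈ F) (hw : w ∈ F) (hne : u ≠ w) : 1 ≤ sdim F := by
  have h1 : u - w ∈ vectorSpan ℝ F := vsub_mem_vectorSpan ℝ hu hw
  rw [sdim, Nat.one_le_iff_ne_zero]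
  intro h0
  rw [Submodule.finrank_eq_zero] at h0
  rw [h0, Submodule.mem_bot, sub_eq_zero] at h1
  exact hne h1

theorem LocalData.sdim_le_one (D : LocalData P v Φ h) (hvP : v ∈ P) (hFP : F ⊆ P) (hv : v ∈ F)
    {H : Set (Fin n → ℝ)} (hH : H ∈ Φ) (hall : ∀ K ∈ Φ, K ≠ H → F ⊆ K) : sdim F ≤ 1 := by
  obtain ⟨e, he⟩ := D.exists_direction hvP hH
  have : vectorSpan ℝ F ≤ Submodule.span ℝ {e} := by
    rw [vectorSpan_eq_span_vsub_set_right ℝ hv, Submodule.span_le]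
    rintro _ ⟨x, hx, rfl⟩
    obtain ⟨t, -, ht⟩ := he x (hFP hx) fun K hK hne => hall K hK hne hx
    exact Submodule.mem_span_singleton.2 ⟨t, ht.symm⟩
  exact (Submodule.finrank_mono this).trans
    ((finrank_span_le_card ({e} : Set (Fin n → ℝ))).trans (by simp))

theorem LocalData.isJoin (D : LocalData P v Φ h) (hF : IsFace P F) (hvF : v ∈ F)
    {w : Fin n → ℝ} (hwF : w ∈ F) (hall : ∀ K ∈ Φ, w ∈ K → F ⊆ K) : IsJoin P {v} {w} F := by
  refine ⟨hF, by simpa, by simpa, fun J hJ hvJ hwJ x hx => ?_⟩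
  rw [Set.singleton_subset_iff] at hvJ hwJ
  exact D.mem_face hJ hvJ (hF.subset hx) fun K hK hJK => hall K hK (hJK hwJ) hx

/-- If a one-dimensional face through `v` were missed by two facets at `v`, it would contain the
neighbours of `v` along two linearly independent directions. -/
theorem LocalData.exists_of_sdim_eq_one (D : LocalData P v Φ h) (hP : IsPolytope P)
    (hv : IsVertex P v) (hF : IsFace P F) (hvF : v ∈ F) (hdim : sdim F = 1)
    {w : Fin n → ℝ} (hwF : w ∈ F) (hwv : w ≠ v) :
    ∃ H ∈ Φ, w ∉ H ∧ ∀ K ∈ Φ, K ≠ H → F ⊆ K := by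
  obtain ⟨H, hH, hwH⟩ : ∃ H ∈ Φ, w ∉ H := by
    by_contra hcon
    push Not at hcon
    exact hwv (D.eq_of_mem_all hv.mem (hF.subset hwF) hcon)
  refine ⟨H, hH, hwH, fun K hK hKH => ?_⟩
  by_contra hFK
  have hFH : ¬ F ⊆ H := fun h => hwH (h hwF)
  obtain ⟨a, ha, hav, haK⟩ := D.exists_neighbor hP hv.mem hH
  obtain ⟨b, hb, hbv, hbK⟩ := D.exists_neighbor hP hv.mem hK
  have haF : a ∈ F := D.mem_face hF hvF ha.mem fun L hL hFL =>
    haK L hL (by rintro rfl; exact hFH hFL)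
  have hbF : b ∈ F := D.mem_face hF hvF hb.mem fun L hL hFL =>
    hbK L hL (by rintro rfl; exact hFK hFL)
  have haV : a - v ∈ vectorSpan ℝ F := vsub_mem_vectorSpan ℝ haF hvF
  have hbV : b - v ∈ vectorSpan ℝ F := vsub_mem_vectorSpan ℝ hbF hvF
  obtain ⟨c, hc⟩ := exists_smul_eq_of_finrank_eq_one hdim
    (x := (⟨a - v, haV⟩ : vectorSpan ℝ F))
    (by simpa [Subtype.ext_iff, sub_eq_zero] using hav) ⟨b - v, hbV⟩
  have hc' : c • (a - v) = b - v := congrArg Subtype.val hc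
  have h1 : h H (b - v) = 0 := (D.apply_eq_zero_iff hH hb.mem).2 (hbK H hH (Ne.symm hKH))
  rw [← hc', map_smul, smul_eq_mul] at h1
  rcases mul_eq_zero.1 h1 with h0 | h0
  · rw [h0, zero_smul] at hc'
    exact hbv (sub_eq_zero.1 hc'.symm)
  · have haH := (D.apply_eq_zero_iff hH ha.mem).1 h0
    refine hav (D.eq_of_mem_all hv.mem ha.mem fun L hL => ?_)
    by_cases hLH : L = H
    · rw [hLH]; exact haH
    · exact haK L hL hLH

end LocalData

/-! ### The characterization of edges -/

theorem stmt14 {n : ℕ} (P : Set (Fin n → ℝ)) (hP : IsPolytope P)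
    (hsimple : IsSimplePolytope P)
    (F : Set (Fin n → ℝ)) (hF : IsFace P F) :
    IsEdge P F ↔
      {p : Set (Fin n → ℝ) | ∃ u v : Fin n → ℝ, u ≠ v ∧
        IsVertex P u ∧ IsVertex P v ∧ IsJoin P {u} {v} F ∧
        p = {u, v}}.ncard = 1 := by
  classical
  constructor
  · rintro ⟨-, hdim⟩
    obtain ⟨x, hx, y, hy, hxy⟩ : ∃ x ∈ F, ∃ y ∈ F, x ≠ y := by
      by_contra hcon
      push Not at hcon
      have : vectorSpan ℝ F = ⊥ := vectorSpan_of_subsingleton ℝ (fun a ha b hb => hcon a ha b hb)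
      rw [sdim, this, finrank_bot] at hdim
      omega
    have hvert : ∀ p, ∀ z ∈ F, z ≠ p → ∃ w ∈ F, IsVertex P w ∧ w ≠ p := by
      obtain ⟨S, rfl⟩ := hP
      exact fun p z hz hzp => exists_vertex_ne S hF p z hz hzp
    obtain ⟨u, huF, hu, -⟩ := hvert y x hx hxy
    obtain ⟨w, hwF, hw, hwu⟩ : ∃ w ∈ F, IsVertex P w ∧ w ≠ u := by
      by_cases hxu : x = u
      · exact hvert u y hy (by rw [← hxu]; exact hxy.symm)
      · exact hvert u x hx hxu
    obtain ⟨Φ, h, D⟩ := exists_localData hP hsimple hu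
    obtain ⟨H, hH, hwH, hall⟩ := D.exists_of_sdim_eq_one hP hu hF huF hdim hwF hwu
    refine Set.ncard_eq_one.2 ⟨{u, w}, ?_⟩
    ext p
    simp only [Set.mem_ofPred_eq, Set.mem_singleton_iff]
    constructor
    · rintro ⟨a, b, hab, ha, hb, hj, rfl⟩
      have haF : a ∈ F := hj.2.1 rfl
      have hbF : b ∈ F := hj.2.2.1 rfl
      have huniq : ∀ c ∈ F, IsVertex P c → c = u ∨ c = w := by
        intro c hcF hc
        by_cases hcu : c = u
        · exact Or.inl hcu
        · exact Or.inr (D.neighbor_unique hu hH hc hcu (fun K hK hne => hall K hK hne hcF)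
            hw hwu (fun K hK hne => hall K hK hne hwF))
      rcases huniq a haF ha with rfl | rfl <;> rcases huniq b hbF hb with rfl | rfl
      · exact absurd rfl hab
      · rfl
      · exact Set.pair_comm _ _
      · exact absurd rfl hab
    · rintro rfl
      refine ⟨u, w, hwu.symm, hu, hw, D.isJoin hF huF hwF fun K hK hwK => ?_, rfl⟩
      exact hall K hK (by rintro rfl; exact hwH hwK)
  · intro hcard
    obtain ⟨p, hp⟩ := Set.ncard_eq_one.1 hcard
    obtain ⟨u₀, v₀, huv, hu₀, hv₀, hj, hp₀⟩ := (hp ▸ Set.mem_singleton p : p ∈ _)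
    have hpair : ∀ u w, u ≠ w → IsVertex P u → IsVertex P w → IsJoin P {u} {w} F →
        ({u, w} : Set (Fin n → ℝ)) = {u₀, v₀} := by
      intro u w h1 h2 h3 h4
      have : ({u, w} : Set (Fin n → ℝ)) ∈ ({p} : Set (Set (Fin n → ℝ))) :=
        hp ▸ ⟨u, w, h1, h2, h3, h4, rfl⟩
      rw [← hp₀]; exact this
    have huF : u₀ ∈ F := hj.2.1 rfl
    have hvF : v₀ ∈ F := hj.2.2.1 rfl
    have hloc : ∀ v, ∃ Φ h, IsVertex P v → LocalData P v Φ h := by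
      intro v
      by_cases hv : IsVertex P v
      · obtain ⟨Φ, h, D⟩ := exists_localData hP hsimple hv
        exact ⟨Φ, h, fun _ => D⟩
      · exact ⟨∅, 0, fun h => absurd h hv⟩
    choose Φ h hD using hloc
    have hVfin : {v | IsVertex P v ∧ v ∈ F}.Finite := by
      obtain ⟨S, rfl⟩ := hP
      exact S.finite_toSet.subset fun v hv => hv.1.mem_generators
    set V := hVfin.toFinset with hV
    have memV : ∀ v, v ∈ V ↔ IsVertex P v ∧ v ∈ F := by simp [hV]
    -- label a vertex of `F` by the facets through it that do not contain `F`
    set σ : (Fin n → ℝ) → Finset (Set (Fin n → ℝ)) :=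
      fun v => (Φ v).filter (fun H => ¬ F ⊆ H) with hσ
    have memσ : ∀ v H, H ∈ σ v ↔ H ∈ Φ v ∧ ¬ F ⊆ H := by simp [hσ]
    -- a facet containing `F` contains every vertex of `F`
    have hσcard : ∀ v ∈ V, (σ v).card = (σ u₀).card := by
      intro v hv
      obtain ⟨hv1, hv2⟩ := (memV v).1 hv
      have h1 := Finset.card_filter_add_card_filter_not (s := Φ v) (fun H => F ⊆ H)
      have h2 := Finset.card_filter_add_card_filter_not (s := Φ u₀) (fun H => F ⊆ H)
      have h3 : (Φ v).filter (fun H => F ⊆ H) = (Φ u₀).filter (fun H => F ⊆ H) := by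
        ext H
        simp only [Finset.mem_filter, (hD v hv1).mem, (hD u₀ hu₀).mem]
        exact ⟨fun h => ⟨⟨h.1.1, h.2 huF⟩, h.2⟩, fun h => ⟨⟨h.1.1, h.2 hv2⟩, h.2⟩⟩
      have h4 := (hD v hv1).card
      have h5 := (hD u₀ hu₀).card
      rw [h3] at h1
      simp only [hσ]
      omega
    have hsub : ∀ u ∈ V, ∀ w ∈ V, ∀ H ∈ Φ u,
        (σ u).erase H ⊆ σ w ↔ ∀ K ∈ Φ u, K ≠ H → w ∈ K := by
      intro u hu w hw H hH
      obtain ⟨hu1, hu2⟩ := (memV u).1 hu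
      obtain ⟨hw1, hw2⟩ := (memV w).1 hw
      constructor
      · intro hsub K hK hne
        by_cases hFK : F ⊆ K
        · exact hFK hw2
        · have := hsub (Finset.mem_erase.2 ⟨hne, (memσ _ _).2 ⟨hK, hFK⟩⟩)
          exact (((hD w hw1).mem K).1 ((memσ _ _).1 this).1).2
      · intro hall K hK
        obtain ⟨hne, hK⟩ := Finset.mem_erase.1 hK
        obtain ⟨hK1, hK2⟩ := (memσ _ _).1 hK
        exact (memσ _ _).2 ⟨((hD w hw1).mem K).2 ⟨(((hD u hu1).mem K).1 hK1).1, hall K hK1 hne⟩,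
          hK2⟩
    have hdisj : ∀ u ∈ V, ∀ w ∈ V, Disjoint (σ u) (σ w) → IsJoin P {u} {w} F := by
      intro u hu w hw hdis
      obtain ⟨hu1, hu2⟩ := (memV u).1 hu
      obtain ⟨hw1, hw2⟩ := (memV w).1 hw
      refine (hD u hu1).isJoin hF hu2 hw2 fun K hK hwK => ?_
      by_contra hFK
      refine Finset.disjoint_left.1 hdis ((memσ _ _).2 ⟨hK, hFK⟩) ((memσ _ _).2 ⟨?_, hFK⟩)
      exact ((hD w hw1).mem K).2 ⟨(((hD u hu1).mem K).1 hK).1, hwK⟩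
    have hdisj₀ : Disjoint (σ u₀) (σ v₀) := by
      rw [Finset.disjoint_left]
      intro K hK hK'
      obtain ⟨h1, h2⟩ := (memσ _ _).1 hK
      obtain ⟨h3, -⟩ := (memσ _ _).1 hK'
      obtain ⟨h4, h5⟩ := ((hD u₀ hu₀).mem K).1 h1
      obtain ⟨-, h6⟩ := ((hD v₀ hv₀).mem K).1 h3
      exact h2 (hj.2.2.2 K h4.1 (by simpa using h5) (by simpa using h6))
    have hpiv : ∀ u ∈ V, ∀ H ∈ σ u, ∃ u' ∈ V, u' ≠ u ∧ (σ u).erase H ⊆ σ u' ∧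
        ∀ w ∈ V, w ≠ u → (σ u).erase H ⊆ σ w → w = u' := by
      intro u hu H hH
      obtain ⟨hu1, hu2⟩ := (memV u).1 hu
      obtain ⟨hH1, hH2⟩ := (memσ _ _).1 hH
      obtain ⟨u', hu', hne, hall⟩ := (hD u hu1).exists_neighbor hP hu1.mem hH1
      have hu'V : u' ∈ V := (memV _).2 ⟨hu', (hD u hu1).mem_face hF hu2 hu'.mem
        fun K hK hFK => hall K hK (by rintro rfl; exact hH2 hFK)⟩
      refine ⟨u', hu'V, hne, (hsub u hu u' hu'V H hH1).2 hall, fun w hw hwu hwall => ?_⟩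
      exact (hD u hu1).neighbor_unique hu1 hH1 ((memV w).1 hw).1 hwu
        ((hsub u hu w hw H hH1).1 hwall) hu' hne hall
    have hu₀V : u₀ ∈ V := (memV _).2 ⟨hu₀, huF⟩
    have hv₀V : v₀ ∈ V := (memV _).2 ⟨hv₀, hvF⟩
    -- with at most one label per vertex, `F` lies in all facets at `u₀` but one
    by_cases hm : 2 ≤ (σ u₀).card
    · exfalso
      obtain ⟨u, hu, w, hw, hdis, hn1, hn2⟩ :=
        parity_aux V σ _ hm hσcard hpiv u₀ v₀ hu₀V hv₀V hdisj₀
      have huw : u ≠ w := by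
        rintro rfl
        rw [disjoint_self, Finset.bot_eq_empty] at hdis
        have := hσcard u hu
        rw [hdis, Finset.card_empty] at this
        omega
      have := hpair u w huw ((memV u).1 hu).1 ((memV w).1 hw).1 (hdisj u hu w hw hdis)
      rcases Set.pair_eq_pair_iff.1 this with h | h
      · exact hn1 h
      · exact hn2 h
    · obtain ⟨H, hH, hvH⟩ : ∃ H ∈ Φ u₀, v₀ ∉ H := by
        by_contra hcon
        push Not at hcon
        exact huv ((hD u₀ hu₀).eq_of_mem_all hu₀.mem hv₀.mem hcon).symm
      have hHσ : H ∈ σ u₀ := (memσ _ _).2 ⟨hH, fun h => hvH (h hvF)⟩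
      refine ⟨hF, le_antisymm ?_ (sdim_pos huF hvF huv)⟩
      refine (hD u₀ hu₀).sdim_le_one hu₀.mem hF.subset huF hH fun K hK hne => ?_
      by_contra hFK
      exact hne (Finset.card_le_one.1 (by omega) K ((memσ _ _).2 ⟨hK, hFK⟩) H hHσ)
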